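/- arXiv:1811.07533 — 2 statements merged into one kernel-verified Lean document; each statement's English description precedes it below -/
import Mathlib

section
/- Let K, D be positive natural numbers, let α > 0, and let θ : Fin K × Fin D → ℝ satisfy θ(k,d) ≠ 0 for all (k,d). Then the sum over all (k,d) ∈ Fin K × Fin D of the Kullback–Leibler divergence from N(θ(k,d), α·θ(k,d)²) to N(0, (α + 1)·θ(k,d)²) equals K·D·(1/2)·log(1 + 1/α); in particular the sum does not depend on the weight parameters θ. -/
/-!
The sum has `K * D` equal terms. Each is an instance of the closed form
`KL(N(m, v) ‖ N(n, w)) = (log (w / v) + (v + (m - n)²) / w - 1) / 2`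
(`klDivReal_gaussianReal`): the density of one Gaussian with respect to the other is the quotient of
their Lebesgue densities, its logarithm is a quadratic polynomial, and that polynomial is integrated
using the first two moments of `N(m, v)`. For `m = θ`, `v = αθ²`, `n = 0`, `w = (α + 1)θ²` one has
`v + m² = w`, so only `log (w / v) / 2 = log (1 + 1 / α) / 2` survives.
-/

open MeasureTheory ProbabilityTheory

/-- The Kullback–Leibler divergence `∫ log (dμ/dν) dμ` (real-valued; this equals the
KL divergence when `μ ≪ ν` and the integrand is integrable). -/
noncomputable def klDivReal (μ ν : Measure ℝ) : ℝ :=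
  ∫ x, Real.log ((μ.rnDeriv ν) x).toReal ∂μ

lemma integral_sq_gaussianReal (m : ℝ) (v : NNReal) :
    ∫ x, x ^ 2 ∂gaussianReal m v = v + m ^ 2 := by
  have h := variance_eq_sub (memLp_id_gaussianReal (μ := m) (v := v) 2)
  rw [variance_id_gaussianReal] at h
  simp only [Pi.pow_apply, id_eq, integral_id_gaussianReal] at h
  linarith

lemma integral_sub_sq_gaussianReal (m n : ℝ) (v : NNReal) :
    Integrable (fun x ↦ (x - n) ^ 2) (gaussianReal m v) ∧
      ∫ x, (x - n) ^ 2 ∂gaussianReal m v = v + (m - n) ^ 2 := by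
  have hL := memLp_id_gaussianReal (μ := m) (v := v) 2
  have h2 : Integrable (fun x : ℝ ↦ x ^ 2) (gaussianReal m v) := hL.integrable_sq
  have h1 : Integrable (fun x : ℝ ↦ x) (gaussianReal m v) := hL.integrable (by norm_num)
  have h1' : Integrable (fun x : ℝ ↦ 2 * n * x) (gaussianReal m v) := h1.const_mul _
  have hc : Integrable (fun _ : ℝ ↦ n ^ 2) (gaussianReal m v) := integrable_const _
  have h21 : Integrable (fun x : ℝ ↦ x ^ 2 - 2 * n * x) (gaussianReal m v) := h2.sub h1'
  have e : (fun x : ℝ ↦ (x - n) ^ 2) = fun x ↦ x ^ 2 - 2 * n * x + n ^ 2 := by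
    funext x; ring
  rw [e]
  refine ⟨h21.add hc, ?_⟩
  rw [integral_add h21 hc, integral_sub h2 h1', integral_const_mul, integral_sq_gaussianReal,
    integral_id_gaussianReal]
  simp
  ring

lemma log_gaussianPDFReal (m : ℝ) {v : NNReal} (hv : v ≠ 0) (x : ℝ) :
    Real.log (gaussianPDFReal m v x) =
      -(Real.log (2 * Real.pi) + Real.log v) / 2 - (x - m) ^ 2 / (2 * v) := by
  have hv' : (0 : ℝ) < v := by positivity
  have hpi := Real.pi_pos
  rw [gaussianPDFReal, Real.log_mul (by positivity) (by positivity), Real.log_exp, Real.log_inv,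
    Real.log_sqrt (by positivity), Real.log_mul (by positivity) hv'.ne']
  ring

lemma log_rnDeriv_gaussianReal (m n : ℝ) {v w : NNReal} (hv : v ≠ 0) (hw : w ≠ 0) :
    (fun x ↦ Real.log ((gaussianReal m v).rnDeriv (gaussianReal n w) x).toReal)
      =ᵐ[gaussianReal m v] fun x ↦
        (Real.log w - Real.log v) / 2 + ((x - n) ^ 2 / (2 * w) - (x - m) ^ 2 / (2 * v)) := by
  have hμ := gaussianReal_absolutelyContinuous m hv
  have hν := gaussianReal_absolutelyContinuous n hw
  have hμν := hμ.trans (gaussianReal_absolutelyContinuous' n hw)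
  filter_upwards [hμν.ae_le (Measure.rnDeriv_eq_div hμ hν), hμ.ae_le (rnDeriv_gaussianReal m v),
    hμ.ae_le (rnDeriv_gaussianReal n w)] with x h h1 h2
  rw [h, h1, h2, ENNReal.toReal_div, toReal_gaussianPDF, toReal_gaussianPDF,
    Real.log_div (gaussianPDFReal_pos _ _ _ hv).ne' (gaussianPDFReal_pos _ _ _ hw).ne',
    log_gaussianPDFReal m hv, log_gaussianPDFReal n hw]
  ring

lemma klDivReal_gaussianReal (m n : ℝ) {v w : NNReal} (hv : v ≠ 0) (hw : w ≠ 0) :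
    klDivReal (gaussianReal m v) (gaussianReal n w) =
      (Real.log (w / v) + (v + (m - n) ^ 2) / w - 1) / 2 := by
  have hv' : (v : ℝ) ≠ 0 := by exact_mod_cast hv
  have hw' : (w : ℝ) ≠ 0 := by exact_mod_cast hw
  obtain ⟨hn, en⟩ := integral_sub_sq_gaussianReal m n v
  obtain ⟨hm, em⟩ := integral_sub_sq_gaussianReal m m v
  have hn' := hn.div_const (2 * (w : ℝ))
  have hm' := hm.div_const (2 * (v : ℝ))
  have hnm : Integrable (fun x ↦ (x - n) ^ 2 / (2 * (w : ℝ)) - (x - m) ^ 2 / (2 * (v : ℝ)))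
      (gaussianReal m v) := hn'.sub hm'
  rw [klDivReal, integral_congr_ae (log_rnDeriv_gaussianReal m n hv hw),
    integral_add (integrable_const _) hnm, integral_sub hn' hm', integral_div,
    integral_div, integral_div, en, em, Real.log_div hw' hv']
  simp
  field_simp
  ring

/-- The sum over all entries `(k, d)` of the KL divergence from `N(θ(k,d), α·θ(k,d)²)` to
`N(0, (α+1)·θ(k,d)²)` equals `K·D·(1/2)·log(1 + 1/α)`, independent of `θ`. -/
theorem sum_klDiv_weights (K D : ℕ) (hK : 0 < K) (hD : 0 < D) (α : ℝ) (hα : 0 < α)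
    (θ : Fin K × Fin D → ℝ) (hθ : ∀ kd, θ kd ≠ 0) :
    ∑ kd : Fin K × Fin D,
        klDivReal (gaussianReal (θ kd) (α * θ kd ^ 2).toNNReal)
          (gaussianReal 0 ((α + 1) * θ kd ^ 2).toNNReal) =
      (K : ℝ) * D * ((1 / 2) * Real.log (1 + 1 / α)) := by
  have key : ∀ kd, klDivReal (gaussianReal (θ kd) (α * θ kd ^ 2).toNNReal)
      (gaussianReal 0 ((α + 1) * θ kd ^ 2).toNNReal) = (1 / 2) * Real.log (1 + 1 / α) := by
    intro kd
    have ht := hθ kd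
    have hv : 0 < α * θ kd ^ 2 := by positivity
    have hw : 0 < (α + 1) * θ kd ^ 2 := by positivity
    rw [klDivReal_gaussianReal _ _ (Real.toNNReal_pos.2 hv).ne' (Real.toNNReal_pos.2 hw).ne',
      Real.coe_toNNReal _ hv.le, Real.coe_toNNReal _ hw.le]
    have e1 : (α + 1) * θ kd ^ 2 / (α * θ kd ^ 2) = 1 + 1 / α := by field_simp
    have e2 : (α * θ kd ^ 2 + (θ kd - 0) ^ 2) / ((α + 1) * θ kd ^ 2) = 1 := by
      rw [div_eq_one_iff_eq hw.ne']; ring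
    rw [e1, e2]
    ring
  simp [key]
end

section
/- Let n be a natural number and let μ, ν : Fin n → (probability measures on ℝ). Then the Kullback–Leibler divergence from the product measure ⨂_{i} μ(i) to the product measure ⨂_{i} ν(i) equals ∑_{i} KL(μ(i) ‖ ν(i)) (as an identity in the extended nonnegative reals). -/
/-!
For probability measures the divergence defined here is Mathlib's `InformationTheory.klDiv`, whose
mass correction `ν univ - μ univ` vanishes. Mathlib's chain rule for composition-products,
applied to constant kernels, gives
`KL(μ₁ ⊗ μ₂ ‖ ν₁ ⊗ ν₂) = KL(μ₁ ‖ ν₁) + KL(μ₁ ⊗ μ₂ ‖ μ₁ ⊗ ν₂)`, and the last term equals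
`KL(μ₂ ‖ ν₂)` after swapping the factors. The result on `Fin n` follows by induction on `n`,
since data processing in both directions makes the divergence invariant under the measurable
equivalence splitting off one coordinate.
-/

open MeasureTheory
open scoped ENNReal

/-- The Kullback–Leibler divergence, valued in `[0, ∞]`: it is `∫ log (dμ/dν) dμ` when
`μ ≪ ν` and this integrand is `μ`-integrable, and `+∞` otherwise. -/
noncomputable def klDiv {Ω : Type*} [MeasurableSpace Ω] (μ ν : Measure Ω) : ℝ≥0∞ :=
  open scoped Classical in
  if μ ≪ ν ∧ Integrable (fun x => Real.log ((μ.rnDeriv ν) x).toReal) μ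
  then ENNReal.ofReal (∫ x, Real.log ((μ.rnDeriv ν) x).toReal ∂μ)
  else ∞

lemma klDiv_eq_informationTheory_klDiv {Ω : Type*} [MeasurableSpace Ω] (μ ν : Measure Ω)
    [IsProbabilityMeasure μ] [IsProbabilityMeasure ν] :
    klDiv μ ν = InformationTheory.klDiv μ ν := by
  rw [InformationTheory.klDiv_def]
  simp only [klDiv, llr_def, probReal_univ, add_sub_cancel_right]
  -- The two sides differ only in the decidability instance of the conditional.
  congr

lemma klDiv_map_measurableEquiv {Ω Ω' : Type*} [MeasurableSpace Ω] [MeasurableSpace Ω']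
    (μ ν : Measure Ω) [IsProbabilityMeasure μ] [IsProbabilityMeasure ν] (e : Ω ≃ᵐ Ω') :
    InformationTheory.klDiv (μ.map e) (ν.map e) = InformationTheory.klDiv μ ν := by
  refine le_antisymm (InformationTheory.klDiv_map_le μ ν e.measurable) ?_
  have : IsProbabilityMeasure (μ.map e) := Measure.isProbabilityMeasure_map e.measurable.aemeasurable
  have : IsProbabilityMeasure (ν.map e) := Measure.isProbabilityMeasure_map e.measurable.aemeasurable
  have h := InformationTheory.klDiv_map_le (μ.map e) (ν.map e) e.symm.measurable
  simpa using h

lemma klDiv_prod {Ω Ω' : Type*} [MeasurableSpace Ω] [MeasurableSpace Ω']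
    (μ₁ ν₁ : Measure Ω) (μ₂ ν₂ : Measure Ω')
    [IsProbabilityMeasure μ₁] [IsProbabilityMeasure ν₁]
    [IsProbabilityMeasure μ₂] [IsProbabilityMeasure ν₂] :
    InformationTheory.klDiv (μ₁.prod μ₂) (ν₁.prod ν₂)
      = InformationTheory.klDiv μ₁ ν₁ + InformationTheory.klDiv μ₂ ν₂ := by
  have h := InformationTheory.klDiv_compProd_eq_add μ₁ ν₁
    (ProbabilityTheory.Kernel.const Ω μ₂) (ProbabilityTheory.Kernel.const Ω ν₂)
  have h' := InformationTheory.klDiv_compProd_left μ₂ ν₂ (ProbabilityTheory.Kernel.const Ω' μ₁)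
  simp only [Measure.compProd_const] at h h'
  rw [h, ← h', ← klDiv_map_measurableEquiv (μ₁.prod μ₂) _ MeasurableEquiv.prodComm]
  change _ + InformationTheory.klDiv (Measure.map Prod.swap _) (Measure.map Prod.swap _) = _
  simp only [Measure.prod_swap]

/-- KL divergence is additive over products: the KL divergence between product measures
equals the sum of the coordinatewise KL divergences. -/
theorem klDiv_pi (n : ℕ) (μ ν : Fin n → Measure ℝ)
    [∀ i, IsProbabilityMeasure (μ i)] [∀ i, IsProbabilityMeasure (ν i)] :
    klDiv (Measure.pi μ) (Measure.pi ν) = ∑ i, klDiv (μ i) (ν i) := by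
  simp_rw [klDiv_eq_informationTheory_klDiv]
  induction n with
  | zero =>
    -- The empty products are both the unit mass on a one-point space.
    rw [Measure.pi_of_empty μ, Measure.pi_of_empty ν]
    simp [InformationTheory.klDiv_self]
  | succ n ih =>
    rw [Fin.sum_univ_succ, ← ih (fun i => μ i.succ) (fun i => ν i.succ), ← klDiv_prod,
      ← klDiv_map_measurableEquiv (Measure.pi μ) (Measure.pi ν)
        (MeasurableEquiv.piFinSuccAbove (fun _ => ℝ) 0),
      (measurePreserving_piFinSuccAbove μ 0).map_eq,
      (measurePreserving_piFinSuccAbove ν 0).map_eq]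
    simp only [Fin.succAbove_zero]
end
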